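/- arXiv:2310.20600 — 4 statements merged into one kernel-verified Lean document; each statement's English description precedes it below -/
import Mathlib

section
/- Let n ≤ 3 be a natural number and let A be a set of functions T : {1,…,n} → {1,−1} with the property that for any three (not necessarily distinct) elements T₁, T₂, T₃ of A, the pointwise product T₁·T₂·T₃ is not the constant function 1. Then there exists a subset S of {1,…,n} such that ∏_{i ∈ S} T(i) = −1 for every T ∈ A. -/
/-!
Identify `{1, -1}` with `ZMod 2`, so that `A` becomes a set of vectors in a space of dimension at
most `3` in which no three elements sum to zero; a subset `S` with all products `-1` is a linear
functional equal to `1` on `A`. Pick a basis `b ⊆ A` of the span of `A` and the functional that is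
`1` on `b`. Every element of `A` is the sum of a subset `t` of `b`, and its value under the
functional is the parity of `t`. If `t` were even, it would yield a vanishing sum of at most
`dim + 1 ≤ 4` distinct elements of `A`, odd in number, hence of one or three of them.
-/

open Module Submodule

section ZModTwo

variable {V : Type*} [AddCommGroup V] [Module (ZMod 2) V]

theorem zmod_two_smul_eq_ite (c : ZMod 2) (v : V) : c • v = if c = 1 then v else 0 := by
  obtain rfl | rfl : c = 0 ∨ c = 1 := by
    revert c
    decide
  · rw [zero_smul, if_neg zero_ne_one]
  · rw [one_smul, if_pos rfl]

theorem mem_span_zmod_two_iff_exists_sum {s : Set V} {x : V} :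
    x ∈ span (ZMod 2) s ↔ ∃ t : Finset V, ↑t ⊆ s ∧ ∑ v ∈ t, v = x := by
  constructor
  · intro hx
    obtain ⟨c, t, hts, -, hsum⟩ := mem_span_iff_exists_finset_subset.mp hx
    refine ⟨t.filter (c · = 1), fun v hv => hts (Finset.mem_of_mem_filter v hv), ?_⟩
    simp only [← hsum, zmod_two_smul_eq_ite, Finset.sum_filter]
  · rintro ⟨t, hts, rfl⟩
    exact sum_mem fun v hv => subset_span (hts hv)

/-- The witness is `t` with the membership of `v` toggled. -/
theorem exists_odd_sum_eq_zero_of_even_sum_eq {A : Set V} {t : Finset V} {v : V} (htA : ↑t ⊆ A)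
    (hv : v ∈ A) (ht : Even t.card) (hsum : ∑ u ∈ t, u = v) :
    ∃ s : Finset V, ↑s ⊆ A ∧ Odd s.card ∧ s.card ≤ t.card + 1 ∧ ∑ u ∈ s, u = 0 := by
  classical
  by_cases hvt : v ∈ t
  · have hcard : (t.erase v).card + 1 = t.card := Finset.card_erase_add_one hvt
    refine ⟨t.erase v, fun u hu => htA (Finset.mem_of_mem_erase hu), by grind, by lia, ?_⟩
    simpa [hsum] using Finset.sum_erase_add t id hvt
  · refine ⟨insert v t, by simp [Set.insert_subset_iff, hv, htA], ?_, ?_, ?_⟩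
    · rw [Finset.card_insert_of_notMem hvt]
      exact ht.add_one
    · exact Finset.card_insert_le v t
    · rw [Finset.sum_insert hvt, hsum, ZModModule.add_self]

theorem exists_dual_forall_mem_eq_one_of_odd_sum_ne_zero {A : Set V}
    (hA : ∀ s : Finset V, ↑s ⊆ A → Odd s.card → s.card ≤ Module.rank (ZMod 2) V + 1 →
      ∑ v ∈ s, v ≠ 0) :
    ∃ f : Dual (ZMod 2) V, ∀ v ∈ A, f v = 1 := by
  obtain ⟨b, hbA, hspan, hb⟩ := exists_linearIndependent (ZMod 2) A
  replace hb : LinearIndepOn (ZMod 2) id b := hb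
  obtain ⟨f, hf⟩ := exists_dual_forall_apply_eq_one hb
  refine ⟨f, fun v hv => ?_⟩
  obtain ⟨t, htb, hsum⟩ := mem_span_zmod_two_iff_exists_sum.mp (hspan ▸ subset_span hv)
  have hft : f v = t.card := by
    calc f v = ∑ u ∈ t, f u := by rw [← hsum, map_sum]
      _ = ∑ _u ∈ t, 1 := Finset.sum_congr rfl fun u hu => hf u (htb hu)
      _ = t.card := by rw [Finset.sum_const, nsmul_one]
  have ht_rank : (t.card : Cardinal) ≤ Module.rank (ZMod 2) V := by
    simpa using (hb.mono htb).cardinal_le_rank'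
  rw [hft, ZMod.natCast_eq_one_iff_odd]
  by_contra ht
  obtain ⟨s, hsA, hs_odd, hst, hs⟩ :=
    exists_odd_sum_eq_zero_of_even_sum_eq (htb.trans hbA) hv (Nat.not_odd_iff_even.mp ht) hsum
  have hst' : (s.card : Cardinal) ≤ t.card + 1 := by exact_mod_cast hst
  exact hA s hsA hs_odd (hst'.trans (by gcongr)) hs

theorem exists_dual_forall_mem_eq_one_of_rank_le_three (hV : Module.rank (ZMod 2) V ≤ 3)
    {A : Set V} (hA : ∀ u ∈ A, ∀ v ∈ A, ∀ w ∈ A, u + v + w ≠ 0) :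
    ∃ f : Dual (ZMod 2) V, ∀ v ∈ A, f v = 1 := by
  classical
  refine exists_dual_forall_mem_eq_one_of_odd_sum_ne_zero fun s hsA hs_odd hs_rank => ?_
  have hs_card : s.card ≤ 3 + 1 := by
    exact_mod_cast hs_rank.trans (add_le_add_left hV 1)
  obtain hs | hs : s.card = 1 ∨ s.card = 3 := by grind
  · obtain ⟨u, rfl⟩ := Finset.card_eq_one.mp hs
    have hu : u ∈ A := hsA (by simp)
    simpa [ZModModule.add_self] using hA u hu u hu u hu
  · obtain ⟨u, v, w, huv, huw, hvw, rfl⟩ := Finset.card_eq_three.mp hs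
    simpa [huv, huw, hvw, add_assoc] using
      hA u (hsA (by simp)) v (hsA (by simp)) w (hsA (by simp))

theorem exists_finset_forall_dual_apply_eq_sum {ι : Type*} [Finite ι]
    (f : Dual (ZMod 2) (ι → ZMod 2)) :
    ∃ S : Finset ι, ∀ x, f x = ∑ i ∈ S, x i := by
  classical
  have := Fintype.ofFinite ι
  refine ⟨Finset.univ.filter fun i => f (fun j => if i = j then 1 else 0) = 1, fun x => ?_⟩
  simp only [f.pi_apply_eq_sum_univ x, Finset.sum_filter, ← zmod_two_smul_eq_ite, smul_eq_mul,
    mul_comm]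

end ZModTwo

theorem addChar_map_sum {ι G M : Type*} [AddCommMonoid G] [CommMonoid M] (ψ : AddChar G M)
    (s : Finset ι) (x : ι → G) : ψ (∑ i ∈ s, x i) = ∏ i ∈ s, ψ (x i) :=
  map_prod ψ.toMonoidHom (fun i => Multiplicative.ofAdd (x i)) s

/-- The character `a ↦ (-1) ^ a` of `ZMod 2`, through which sign functions are encoded as
vectors over `ZMod 2`. -/
def signChar : AddChar (ZMod 2) ℤ :=
  AddChar.zmodChar 2 neg_one_sq

theorem signChar_one : signChar 1 = -1 :=
  rfl

theorem exists_signChar_comp_eq {ι : Type*} {T : ι → ℤ} (hT : ∀ i, T i = 1 ∨ T i = -1) :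
    ∃ x : ι → ZMod 2, signChar ∘ x = T := by
  have hsign : ∀ i, ∃ a, signChar a = T i := fun i =>
    (hT i).elim (fun h => ⟨0, h ▸ signChar.map_zero_eq_one⟩) fun h => ⟨1, h ▸ signChar_one⟩
  choose x hx using hsign
  exact ⟨x, funext hx⟩

/-- Let `n ≤ 3` and let `A` be a set of functions `T : Fin n → ℤ`
taking values in `{1, -1}`, such that for any three (not necessarily distinct)
elements `T₁, T₂, T₃` of `A` the pointwise product `T₁ · T₂ · T₃` is not the
constant function `1`.  Then there is a subset `S ⊆ Fin n` such that
`∏ i ∈ S, T i = -1` for every `T ∈ A`. -/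
theorem stmt0 (n : ℕ) (hn : n ≤ 3) (A : Set (Fin n → ℤ))
    (hval : ∀ T ∈ A, ∀ i, T i = 1 ∨ T i = -1)
    (hprod : ∀ T₁ ∈ A, ∀ T₂ ∈ A, ∀ T₃ ∈ A, ¬ (∀ i, T₁ i * T₂ i * T₃ i = 1)) :
    ∃ S : Finset (Fin n), ∀ T ∈ A, ∏ i ∈ S, T i = -1 := by
  have hrank : Module.rank (ZMod 2) (Fin n → ZMod 2) ≤ 3 := by
    rw [rank_fin_fun]
    exact_mod_cast hn
  obtain ⟨f, hf⟩ := exists_dual_forall_mem_eq_one_of_rank_le_three hrank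
    (A := {x | signChar ∘ x ∈ A}) fun x hx y hy z hz hxyz =>
      hprod _ hx _ hy _ hz fun i => by
        simp only [Function.comp_apply, ← AddChar.map_add_eq_mul, ← Pi.add_apply, hxyz,
          Pi.zero_apply, AddChar.map_zero_eq_one]
  obtain ⟨S, hS⟩ := exists_finset_forall_dual_apply_eq_sum f
  refine ⟨S, fun T hT => ?_⟩
  obtain ⟨x, rfl⟩ := exists_signChar_comp_eq (hval T hT)
  calc ∏ i ∈ S, signChar (x i) = signChar (f x) := by rw [hS, addChar_map_sum]
    _ = -1 := by rw [hf x hT, signChar_one]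
end

section
/- Let m ≥ 3, let G be the dihedral group of order 2m, let W₁ and W₂ be irreducible 2-dimensional complex representations of G, and let χ : G → ℂ^× be a group homomorphism that is trivial on the rotation subgroup of G. If W₁ and W₂ are isomorphic, then there exists a nonzero G-invariant trilinear form on W₁ × W₂ × χ; if W₁ and W₂ are not isomorphic, then every G-invariant trilinear form on W₁ × W₂ × χ is zero. -/
/-- A representation is irreducible if the underlying space is nonzero and the only
subspaces stable under the group action are `⊥` and `⊤`. -/
def IsIrreducibleRep {k G V : Type*} [CommSemiring k] [Monoid G]
    [AddCommMonoid V] [Module k V] (ρ : Representation k G V) : Prop :=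
  (∃ v : V, v ≠ 0) ∧
    ∀ p : Submodule k V, (∀ (g : G) (v : V), v ∈ p → ρ g v ∈ p) → p = ⊥ ∨ p = ⊤

/-!
An invariant trilinear form on `W₁ × W₂ × χ` is an intertwining map `W₁ → W₂* ⊗ χ⁻¹`, so by Schur's
lemma it suffices that `W₂ ≅ W₂* ⊗ χ⁻¹`, that is, that `W₂` carries a nonzero bilinear form scaled
by `χ⁻¹`.  Write `R` and `S` for the action of a rotation and a reflection.  Irreducibility forces
`J = R - R⁻¹` to be nonzero for some rotation; it commutes with rotations and anticommutes with
reflections, hence `det S = -1`, and `det R = 1` because a rotation is a product of two reflections.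
The area form `ω` satisfies `ω (g x, g y) = det g · ω (x, y)`, so `ω` serves when `χ` is `-1` on the
reflections, and `ω (J x, y)` serves when `χ = 1`.
-/

open Module Representation
open scoped MonoidAlgebra

section RankTwo

variable {R V : Type*} [CommRing R] [AddCommGroup V] [Module R V]
  [Module.Free R V] [Module.Finite R V]

theorem mul_self_add_det_smul_one_eq_trace_smul [Nontrivial R] (hV : finrank R V = 2)
    (T : End R V) : T * T + LinearMap.det T • 1 = LinearMap.trace R V T • T := by
  let b := finBasisOfFinrankEq R V hV
  have hcharpoly := T.aeval_self_charpoly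
  rw [← T.charpoly_toMatrix b, Matrix.charpoly_fin_two, LinearMap.det_toMatrix,
    ← LinearMap.trace_eq_matrix_trace] at hcharpoly
  simp only [map_add, map_sub, map_mul, Polynomial.aeval_X, Polynomial.aeval_C,
    Algebra.algebraMap_eq_smul_one, smul_mul_assoc, one_mul, sq] at hcharpoly
  rw [← sub_eq_zero, ← hcharpoly]
  abel

theorem det_eq_neg_one_of_anticommute [IsDomain R] (hV : finrank R V = 2) {T J : End R V}
    (hT : T * T = 1) (hTJ : T * J = -(J * T)) (hJ : J ≠ 0) : LinearMap.det T = -1 := by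
  set d := LinearMap.det T with hd
  set t := LinearMap.trace R V T
  have hdd : d * d = 1 := by rw [hd, ← map_mul, hT, map_one]
  have hscalar : (1 + d) • (1 : End R V) = t • T := by
    rw [← mul_self_add_det_smul_one_eq_trace_smul hV, hT, add_smul, one_smul]
  have hleft : (1 + d) • J = -(t • (J * T)) := by
    simpa only [smul_mul_assoc, one_mul, hTJ, smul_neg] using congrArg (· * J) hscalar
  have hright : (1 + d) • J = t • (J * T) := by
    simpa only [mul_smul_comm, mul_one] using congrArg (J * ·) hscalar
  have htwo : (1 + d) + (1 + d) = 0 := by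
    refine (smul_eq_zero_iff_left hJ).mp ?_
    rw [add_smul]
    nth_rw 1 [hleft]
    rw [hright, neg_add_cancel]
  -- Since `d² = 1`, this identity forces `d = -1` in characteristic two as well.
  have hsq : (1 + d) * (1 + d) = 0 := by linear_combination htwo + hdd
  exact (neg_eq_of_add_eq_zero_right (mul_self_eq_zero.mp hsq)).symm

theorem exists_separatingLeft_map_map_eq_det_mul [Nontrivial R] (hV : finrank R V = 2) :
    ∃ ω : V →ₗ[R] V →ₗ[R] R, ω.SeparatingLeft ∧
      ∀ (T : End R V) (x y : V), ω (T x) (T y) = LinearMap.det T * ω x y := by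
  let b := finBasisOfFinrankEq R V hV
  have hdet (x y : V) : b.det ![x, y] = b.repr x 0 * b.repr y 1 - b.repr y 0 * b.repr x 1 := by
    simp [Basis.det_apply, Matrix.det_fin_two, Basis.toMatrix_apply]
  let ω : V →ₗ[R] V →ₗ[R] R := LinearMap.mk₂ R (fun x y ↦ b.det ![x, y])
    (by intros; simp [hdet]; ring) (by intros; simp [hdet]; ring)
    (by intros; simp [hdet]; ring) (by intros; simp [hdet]; ring)
  refine ⟨ω, fun x hx ↦ b.ext_elem fun i ↦ ?_, fun T x y ↦ ?_⟩
  · fin_cases i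
    · simpa [ω, hdet] using hx (b 1)
    · simpa [ω, hdet] using hx (b 0)
  · have hcomp : ![T x, T y] = T ∘ ![x, y] := by ext i; fin_cases i <;> rfl
    simp [ω, hcomp]

end RankTwo

section Irreducible

variable {k G V : Type*} [Field k] [AddCommGroup V] [Module k V]

theorem IsIrreducibleRep.isIrreducible [Monoid G] {ρ : Representation k G V}
    (h : IsIrreducibleRep ρ) : ρ.IsIrreducible where
  exists_pair_ne := by
    obtain ⟨v, hv⟩ := h.1
    refine ⟨⊥, ⊤, fun hbot ↦ hv ?_⟩
    have : v ∈ (⊥ : Subrepresentation ρ) := hbot ▸ (Submodule.mem_top : v ∈ (⊤ : Submodule k V))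
    exact this
  eq_bot_or_eq_top p := (h.2 p.toSubmodule p.apply_mem_toSubmodule).imp
    (fun hp ↦ Subrepresentation.toSubmodule_injective hp)
    (fun hp ↦ Subrepresentation.toSubmodule_injective hp)

theorem nontrivial_of_isIrreducible [Monoid G] (ρ : Representation k G V) [ρ.IsIrreducible] :
    Nontrivial V :=
  IsSimpleModule.nontrivial k[G] ρ.asModule

theorem eq_one_or_eq_neg_one_of_commute_of_mul_self_eq_one [Monoid G]
    (ρ : Representation k G V) [ρ.IsIrreducible] {T : End k V} (hcomm : ∀ g, Commute T (ρ g))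
    (hT : T * T = 1) : T = 1 ∨ T = -1 := by
  let f : IntertwiningMap ρ ρ :=
    ⟨T - 1, fun g ↦ ((hcomm g).sub_left (Commute.one_left _)).eq⟩
  rcases IsIrreducible.injective_or_eq_zero f with hinj | hzero
  · refine Or.inr (eq_neg_of_add_eq_zero_left (LinearMap.ext fun x ↦ hinj ?_))
    have hTx : T (T x) = x := LinearMap.congr_fun hT x
    change (T - 1) ((T + 1) x) = (T - 1) 0
    simp [hTx, add_comm]
  · exact Or.inl (sub_eq_zero.mp (congrArg IntertwiningMap.toLinearMap hzero))

theorem finrank_eq_one_of_forall_mul_self_eq_one [Monoid G] (ρ : Representation k G V)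
    [ρ.IsIrreducible] (hρ : ∀ g, ρ g * ρ g = 1) : finrank k V = 1 := by
  have hcomm (g h : G) : Commute (ρ g) (ρ h) :=
    calc ρ g * ρ h = ρ h * ρ h * (ρ g * ρ h) * (ρ g * ρ g) := by simp only [hρ, one_mul, mul_one]
      _ = ρ h * (ρ (h * g) * ρ (h * g)) * ρ g := by simp only [map_mul, mul_assoc]
      _ = ρ h * ρ g := by rw [hρ, mul_one]
  have := nontrivial_of_isIrreducible ρ
  obtain ⟨v, hv⟩ := exists_ne (0 : V)
  let p : Subrepresentation ρ :=
    { toSubmodule := k ∙ v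
      apply_mem_toSubmodule g x hx := by
        rcases eq_one_or_eq_neg_one_of_commute_of_mul_self_eq_one ρ (hcomm g) (hρ g) with h | h
        · simpa [h] using hx
        · simpa [h] using hx }
  have hp : p = ⊤ := (eq_bot_or_eq_top p).resolve_left fun hbot ↦ hv <|
    Submodule.span_singleton_eq_bot.mp (congrArg Subrepresentation.toSubmodule hbot)
  have : k ∙ v = ⊤ := congrArg Subrepresentation.toSubmodule hp
  rw [← finrank_top, ← this, finrank_span_singleton hv]

end Irreducible

section TwistedDual

variable {k G V V₁ V₂ : Type*} [Group G] [CommRing k] [AddCommGroup V] [Module k V]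
  [AddCommGroup V₁] [Module k V₁] [AddCommGroup V₂] [Module k V₂]

/-- The representation `ρ* ⊗ χ⁻¹`, realized on `V*`.  Bilinear forms `β` on `V₁ × V₂` with
`χ g * β (ρ₁ g x) (ρ₂ g y) = β x y`, curried in the first variable, are exactly the intertwining
maps from `ρ₁` to the twisted dual of `ρ₂`. -/
def twistedDual (ρ : Representation k G V) (χ : G →* kˣ) : Representation k G (Dual k V) where
  toFun g := (↑(χ g)⁻¹ : k) • ρ.dual g
  map_one' := by rw [map_one, map_one, inv_one, Units.val_one, one_smul]
  map_mul' g h := by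
    rw [map_mul, map_mul, mul_inv, Units.val_mul, smul_mul_smul_comm]

theorem twistedDual_apply_apply (ρ : Representation k G V) (χ : G →* kˣ) (g : G)
    (f : Dual k V) (x : V) : twistedDual ρ χ g f x = (↑(χ g)⁻¹ : k) * f (ρ g⁻¹ x) :=
  rfl

theorem isIntertwiningMap_twistedDual_iff {ρ₁ : Representation k G V₁}
    {ρ₂ : Representation k G V₂} {χ : G →* kˣ} {β : V₁ →ₗ[k] V₂ →ₗ[k] k} :
    IsIntertwiningMap ρ₁ (twistedDual ρ₂ χ) β ↔
      ∀ g x y, (χ g : k) * β (ρ₁ g x) (ρ₂ g y) = β x y := by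
  simp only [isIntertwiningMap_iff, LinearMap.ext_iff, twistedDual_apply_apply]
  refine forall₂_congr fun g x ↦ ⟨fun h y ↦ ?_, fun h y ↦ ?_⟩
  · rw [h, Units.mul_inv_cancel_left, inv_self_apply]
  · rw [← h, Units.inv_mul_cancel_left, self_inv_apply]

theorem exists_invariant_trilinear_iff (ρ₁ : Representation k G V₁)
    (ρ₂ : Representation k G V₂) (χ : G →* kˣ) :
    (∃ Λ : V₁ →ₗ[k] V₂ →ₗ[k] k →ₗ[k] k, Λ ≠ 0 ∧
      ∀ g x y z, Λ (ρ₁ g x) (ρ₂ g y) (χ g * z) = Λ x y z) ↔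
    ∃ f : IntertwiningMap ρ₁ (twistedDual ρ₂ χ), f ≠ 0 := by
  constructor
  · rintro ⟨Λ, hΛ, hinv⟩
    have hsmul (x y z) : Λ x y z = z * Λ x y 1 := by
      rw [← smul_eq_mul, ← map_smul, smul_eq_mul, mul_one]
    let β : V₁ →ₗ[k] V₂ →ₗ[k] k := Λ.compr₂ (LinearMap.applyₗ 1)
    have hβ : IsIntertwiningMap ρ₁ (twistedDual ρ₂ χ) β :=
      isIntertwiningMap_twistedDual_iff.mpr fun g x y ↦
        calc (χ g : k) * Λ (ρ₁ g x) (ρ₂ g y) 1 = Λ (ρ₁ g x) (ρ₂ g y) (χ g * 1) := by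
              rw [hsmul _ _ (χ g * 1), mul_one]
          _ = Λ x y 1 := hinv g x y 1
    refine ⟨β.intertwiningMap_of_isIntertwiningMap _ _ hβ.isIntertwining, fun h ↦ hΛ ?_⟩
    ext x y
    exact LinearMap.congr_fun₂ (congrArg IntertwiningMap.toLinearMap h) x y
  · rintro ⟨f, hf⟩
    have hinv := isIntertwiningMap_twistedDual_iff.mp ⟨f.isIntertwining⟩
    refine ⟨f.toLinearMap.compr₂ (LinearMap.mul k k), fun h ↦ hf ?_, fun g x y z ↦ ?_⟩
    · ext x y
      simpa using LinearMap.congr_fun (LinearMap.congr_fun₂ h x y) 1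
    · change f.toLinearMap (ρ₁ g x) (ρ₂ g y) * (χ g * z) = f.toLinearMap x y * z
      rw [← hinv g x y]
      ring

end TwistedDual

theorem nonempty_equiv_twistedDual {k G V : Type*} [Group G] [Field k] [AddCommGroup V]
    [Module k V] [FiniteDimensional k V] {ρ : Representation k G V} [ρ.IsIrreducible]
    {χ : G →* kˣ} {β : V →ₗ[k] V →ₗ[k] k} (hβ : β ≠ 0)
    (hinv : ∀ g x y, (χ g : k) * β (ρ g x) (ρ g y) = β x y) :
    Nonempty (ρ.Equiv (twistedDual ρ χ)) := by
  let f : IntertwiningMap ρ (twistedDual ρ χ) := β.intertwiningMap_of_isIntertwiningMap _ _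
    (isIntertwiningMap_twistedDual_iff.mpr hinv).isIntertwining
  have hinj : Function.Injective f := (IsIrreducible.injective_or_eq_zero f).resolve_right
    fun h ↦ hβ (congrArg IntertwiningMap.toLinearMap h)
  exact ⟨f.ofBijective ⟨hinj, (LinearMap.injective_iff_surjective_of_finrank_eq_finrank
    Subspace.dual_finrank_eq.symm).mp hinj⟩⟩

theorem exists_intertwiningMap_ne_zero_iff {k G V W W' : Type*} [Monoid G] [Field k]
    [AddCommGroup V] [Module k V] [AddCommGroup W] [Module k W] [AddCommGroup W'] [Module k W']
    {ρ : Representation k G V} {σ : Representation k G W} {σ' : Representation k G W'}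
    [ρ.IsIrreducible] [σ.IsIrreducible] (e : σ.Equiv σ') :
    (∃ f : IntertwiningMap ρ σ', f ≠ 0) ↔ Nonempty (ρ.Equiv σ) := by
  constructor
  · rintro ⟨f, hf⟩
    let φ : IntertwiningMap ρ σ := e.symm.toIntertwiningMap.comp f
    refine ⟨φ.ofBijective ((IsIrreducible.bijective_or_eq_zero φ).resolve_right fun hφ ↦ hf ?_)⟩
    ext x
    have hφx : e.symm (f x) = 0 :=
      LinearMap.congr_fun (congrArg IntertwiningMap.toLinearMap hφ) x
    exact e.symm.injective (hφx.trans (map_zero e.symm).symm)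
  · rintro ⟨φ⟩
    have := nontrivial_of_isIrreducible ρ
    obtain ⟨x, hx⟩ := exists_ne (0 : V)
    refine ⟨(φ.trans e).toIntertwiningMap, fun h ↦ hx ((φ.trans e).injective ?_)⟩
    rw [map_zero]
    exact LinearMap.congr_fun (congrArg IntertwiningMap.toLinearMap h) x

section Dihedral

open DihedralGroup

variable {k V : Type*} {m : ℕ} [Field k] [AddCommGroup V] [Module k V]
  (ρ : Representation k (DihedralGroup m) V)

theorem exists_apply_r_ne_apply_r_neg [ρ.IsIrreducible] (hV : finrank k V ≠ 1) :
    ∃ i : ZMod m, ρ (r i) ≠ ρ (r (-i)) := by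
  by_contra! hρ
  refine hV (finrank_eq_one_of_forall_mul_self_eq_one ρ fun g ↦ ?_)
  cases g with
  | r i => nth_rw 2 [hρ i]; rw [← map_mul, r_mul_r, add_neg_cancel, r_zero, map_one]
  | sr i => rw [← map_mul, sr_mul_self, map_one]

theorem exists_commute_r_anticommute_sr [ρ.IsIrreducible] (hV : finrank k V ≠ 1) :
    ∃ J : End k V, J ≠ 0 ∧ (∀ i, ρ (r i) * J = J * ρ (r i)) ∧
      ∀ i, ρ (sr i) * J = -(J * ρ (sr i)) := by
  obtain ⟨j, hj⟩ := exists_apply_r_ne_apply_r_neg ρ hV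
  refine ⟨ρ (r j) - ρ (r (-j)), sub_ne_zero.mpr hj, fun i ↦ ?_, fun i ↦ ?_⟩
  · simp only [mul_sub, sub_mul, ← map_mul, r_mul_r, add_comm]
  · simp only [mul_sub, sub_mul, ← map_mul, sr_mul_r, r_mul_sr, neg_sub, sub_neg_eq_add,
      ← sub_eq_add_neg]

theorem det_apply_sr [ρ.IsIrreducible] (hV : finrank k V = 2) (i : ZMod m) :
    LinearMap.det (ρ (sr i)) = -1 := by
  have : FiniteDimensional k V := Module.finite_of_finrank_eq_succ hV
  obtain ⟨J, hJ, -, hsr⟩ := exists_commute_r_anticommute_sr ρ (by omega)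
  exact det_eq_neg_one_of_anticommute hV (by rw [← map_mul, sr_mul_self, map_one]) (hsr i) hJ

theorem det_apply_r [ρ.IsIrreducible] (hV : finrank k V = 2) (i : ZMod m) :
    LinearMap.det (ρ (r i)) = 1 := by
  rw [show r i = sr 0 * sr i by simp, map_mul, map_mul, det_apply_sr ρ hV, det_apply_sr ρ hV,
    neg_mul_neg, one_mul]

theorem map_sr_eq_one_or_eq_neg_one {A : Type*} [Ring A] [NoZeroDivisors A]
    (χ : DihedralGroup m →* Aˣ) (hχ : ∀ i, χ (r i) = 1) :
    (∀ i, χ (sr i) = 1) ∨ ∀ i, χ (sr i) = -1 := by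
  have hconst (i : ZMod m) : χ (sr i) = χ (sr 0) := by
    rw [show sr i = sr 0 * r i by simp, map_mul, hχ, mul_one]
  simp only [hconst, forall_const]
  rw [← Units.inv_eq_self_iff, ← map_inv, inv_sr]

theorem exists_twisted_invariant_form [ρ.IsIrreducible] (hV : finrank k V = 2)
    (χ : DihedralGroup m →* kˣ) (hχ : ∀ i, χ (r i) = 1) :
    ∃ β : V →ₗ[k] V →ₗ[k] k, β ≠ 0 ∧ ∀ g x y, (χ g : k) * β (ρ g x) (ρ g y) = β x y := by
  have : FiniteDimensional k V := Module.finite_of_finrank_eq_succ hV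
  obtain ⟨ω, hsep, hω⟩ := exists_separatingLeft_map_map_eq_det_mul hV
  obtain ⟨J, hJ, hr, hsr⟩ := exists_commute_r_anticommute_sr ρ (by omega)
  have hωJ : ω ∘ₗ J ≠ 0 := fun h ↦ hJ <| LinearMap.ext fun x ↦
    hsep _ fun y ↦ LinearMap.congr_fun₂ h x y
  rcases map_sr_eq_one_or_eq_neg_one χ hχ with hone | hneg
  · refine ⟨ω ∘ₗ J, hωJ, fun g x y ↦ ?_⟩
    cases g with
    | r i =>
      have hx : J (ρ (r i) x) = ρ (r i) (J x) := (LinearMap.congr_fun (hr i) x).symm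
      simp [hx, hω, det_apply_r ρ hV, hχ]
    | sr i =>
      have hx : J (ρ (sr i) x) = -ρ (sr i) (J x) :=
        neg_eq_iff_eq_neg.mp (LinearMap.congr_fun (hsr i) x).symm
      simp [hx, hω, det_apply_sr ρ hV, hone]
  · refine ⟨ω, fun h ↦ hωJ (by rw [h, LinearMap.zero_comp]), fun g x y ↦ ?_⟩
    cases g with
    | r i => simp [hω, det_apply_r ρ hV, hχ]
    | sr i => simp [hω, det_apply_sr ρ hV, hneg]

end Dihedral

theorem stmt1_general {k : Type*} [Field k] (m : ℕ)
    {V₁ V₂ : Type*} [AddCommGroup V₁] [Module k V₁] [AddCommGroup V₂] [Module k V₂]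
    (ρ₁ : Representation k (DihedralGroup m) V₁)
    (ρ₂ : Representation k (DihedralGroup m) V₂)
    (h₁ : IsIrreducibleRep ρ₁) (h₂ : IsIrreducibleRep ρ₂) (d₂ : finrank k V₂ = 2)
    (χ : DihedralGroup m →* kˣ) (hχ : ∀ i : ZMod m, χ (DihedralGroup.r i) = 1) :
    (∃ Λ : V₁ →ₗ[k] V₂ →ₗ[k] k →ₗ[k] k, Λ ≠ 0 ∧
      ∀ g v₁ v₂ z, Λ (ρ₁ g v₁) (ρ₂ g v₂) (χ g * z) = Λ v₁ v₂ z) ↔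
    ∃ e : V₁ ≃ₗ[k] V₂, ∀ g v, e (ρ₁ g v) = ρ₂ g (e v) := by
  have := h₁.isIrreducible
  have := h₂.isIrreducible
  have : FiniteDimensional k V₂ := Module.finite_of_finrank_eq_succ d₂
  obtain ⟨β, hβ, hinv⟩ := exists_twisted_invariant_form ρ₂ d₂ χ hχ
  obtain ⟨e⟩ := nonempty_equiv_twistedDual hβ hinv
  rw [exists_invariant_trilinear_iff, exists_intertwiningMap_ne_zero_iff e]
  exact ⟨fun ⟨φ⟩ ↦ ⟨φ.toLinearEquiv, fun g v ↦ φ.toIntertwiningMap.isIntertwining _ _ g v⟩,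
    fun ⟨φ, hφ⟩ ↦ ⟨.mk φ fun g ↦ LinearMap.ext (hφ g)⟩⟩

/-- Let `m ≥ 3`, let `G` be the dihedral group of order `2m`, let
`W₁, W₂` be irreducible `2`-dimensional complex representations of `G`, and let
`χ : G → ℂˣ` be a homomorphism trivial on the rotation subgroup.  If `W₁ ≅ W₂`
there is a nonzero `G`-invariant trilinear form on `W₁ × W₂ × χ`; if `W₁ ≇ W₂`
every such invariant trilinear form is zero. -/
theorem stmt1 (m : ℕ) (hm : 3 ≤ m)
    {V₁ V₂ : Type*} [AddCommGroup V₁] [Module ℂ V₁] [AddCommGroup V₂] [Module ℂ V₂]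
    (ρ₁ : Representation ℂ (DihedralGroup m) V₁)
    (ρ₂ : Representation ℂ (DihedralGroup m) V₂)
    (h₁ : IsIrreducibleRep ρ₁) (d₁ : Module.finrank ℂ V₁ = 2)
    (h₂ : IsIrreducibleRep ρ₂) (d₂ : Module.finrank ℂ V₂ = 2)
    (χ : DihedralGroup m →* ℂˣ)
    (hχ : ∀ i : ZMod m, χ (DihedralGroup.r i) = 1) :
    ((∃ e : V₁ ≃ₗ[ℂ] V₂, ∀ (g : DihedralGroup m) (v : V₁), e (ρ₁ g v) = ρ₂ g (e v)) →
      ∃ Λ : V₁ →ₗ[ℂ] V₂ →ₗ[ℂ] ℂ →ₗ[ℂ] ℂ, Λ ≠ 0 ∧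
        ∀ (g : DihedralGroup m) (v₁ : V₁) (v₂ : V₂) (z : ℂ),
          Λ (ρ₁ g v₁) (ρ₂ g v₂) ((χ g : ℂ) * z) = Λ v₁ v₂ z) ∧
    ((¬ ∃ e : V₁ ≃ₗ[ℂ] V₂, ∀ (g : DihedralGroup m) (v : V₁), e (ρ₁ g v) = ρ₂ g (e v)) →
      ∀ Λ : V₁ →ₗ[ℂ] V₂ →ₗ[ℂ] ℂ →ₗ[ℂ] ℂ,
        (∀ (g : DihedralGroup m) (v₁ : V₁) (v₂ : V₂) (z : ℂ),
          Λ (ρ₁ g v₁) (ρ₂ g v₂) ((χ g : ℂ) * z) = Λ v₁ v₂ z) → Λ = 0) := by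
  have h := stmt1_general m ρ₁ ρ₂ h₁ h₂ d₂ χ hχ
  exact ⟨h.mpr, fun hiso Λ hΛ ↦ by_contra fun hne ↦ hiso (h.mp ⟨Λ, hne, hΛ⟩)⟩
end

section
/- Let G be the dihedral group of order 8, let W be an irreducible 2-dimensional complex representation of G, and let χ : G → ℂ^× be an arbitrary group homomorphism. Then there exists a nonzero G-invariant trilinear form on W × W × χ. -/
/-!
In dimension two, an area form `ω` turns a nonzero `T : W → W` that intertwines `W` with its twist
by the character `ψ = χ · det W` into the invariant trilinear form `(v, w, z) ↦ z ω(v, T w)`. For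
the dihedral group of order `8` the central rotation `r²` acts on an irreducible `W` of dimension
other than one as `-1`: otherwise it acts trivially, all elements of the image square to one, hence
commute, hence are `±1`. So any two elements of the image commute up to sign, and each pair of signs
`(ψ(r), ψ(s))` is realised by taking for `T` the action of one of `1`, `r`, `s`, `sr`.
-/

open DihedralGroup Module

section AreaForm

variable {k V : Type*} [CommRing k] [AddCommGroup V] [Module k V]

/-- The area form of a two-dimensional space: the bilinear form `b.det ![v, w]`, written out in
coordinates because `Basis.det` is bundled as an alternating map. -/
noncomputable def areaForm (b : Basis (Fin 2) k V) : V →ₗ[k] V →ₗ[k] k :=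
  LinearMap.mk₂ k (fun v w ↦ b.repr v 0 * b.repr w 1 - b.repr v 1 * b.repr w 0)
    (fun _ _ _ ↦ by simp; ring) (fun _ _ _ ↦ by simp; ring)
    (fun _ _ _ ↦ by simp; ring) (fun _ _ _ ↦ by simp; ring)

theorem areaForm_apply (b : Basis (Fin 2) k V) (v w : V) :
    areaForm b v w = b.det ![v, w] := by
  simp only [areaForm, LinearMap.mk₂_apply, Basis.det_apply, Matrix.det_fin_two,
    Basis.toMatrix_apply, Matrix.cons_val_zero, Matrix.cons_val_one]
  ring

theorem areaForm_map_map (b : Basis (Fin 2) k V) (f : V →ₗ[k] V) (v w : V) :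
    areaForm b (f v) (f w) = LinearMap.det f * areaForm b v w := by
  have hcomp : ![f v, f w] = f ∘ ![v, w] := by
    ext i; fin_cases i <;> rfl
  rw [areaForm_apply, areaForm_apply, hcomp, b.det_comp]

theorem areaForm_separatingRight (b : Basis (Fin 2) k V) : (areaForm b).SeparatingRight := by
  intro w hw
  have h₀ := hw (b 0)
  have h₁ := hw (b 1)
  refine b.ext_elem fun i ↦ ?_
  fin_cases i <;> simp_all [areaForm]

theorem exists_invariant_trilinear_of_twist {G : Type*} [Group G] (b : Basis (Fin 2) k V)
    (ρ : Representation k G V) (χ : G →* k) {T : End k V} (hT : T ≠ 0)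
    (htwist : ∀ g, ρ g * T = (χ g * LinearMap.det (ρ g)) • (T * ρ g)) :
    ∃ Λ : V →ₗ[k] V →ₗ[k] k →ₗ[k] k, Λ ≠ 0 ∧
      ∀ (g : G) (v₁ v₂ : V) (z : k), Λ (ρ g v₁) (ρ g v₂) (χ g * z) = Λ v₁ v₂ z := by
  have hinv (g : G) (v w : V) :
      χ g * areaForm b (ρ g v) (T (ρ g w)) = areaForm b v (T w) := by
    refine ((Group.isUnit g).map (LinearMap.det.comp ρ)).mul_left_cancel ?_
    calc LinearMap.det (ρ g) * (χ g * areaForm b (ρ g v) (T (ρ g w)))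
        = areaForm b (ρ g v) (((χ g * LinearMap.det (ρ g)) • (T * ρ g)) w) := by
          simp only [LinearMap.smul_apply, End.mul_apply, map_smul, smul_eq_mul]; ring
      _ = areaForm b (ρ g v) (ρ g (T w)) := by rw [← htwist, End.mul_apply]
      _ = LinearMap.det (ρ g) * areaForm b v (T w) := areaForm_map_map ..
  refine ⟨((areaForm b).compl₂ T).compr₂ (LinearMap.mul k k), fun hzero ↦ hT ?_, ?_⟩
  · refine LinearMap.ext fun w ↦ areaForm_separatingRight b (T w) fun v ↦ ?_
    simpa using congrArg (fun Λ ↦ Λ v w 1) hzero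
  · intro g v w z
    simp only [LinearMap.compr₂_apply, LinearMap.compl₂_apply, LinearMap.mul_apply', ← hinv g v w]
    ring

end AreaForm

theorem commute_of_mul_self_eq_one {M : Type*} [Monoid M] {a b : M} (ha : a * a = 1)
    (hb : b * b = 1) (hab : a * b * (a * b) = 1) : Commute a b := by
  refine Commute.symm ?_
  calc b * a = a * a * (b * a) * (b * b) := by rw [ha, hb, one_mul, mul_one]
    _ = a * (a * b * (a * b)) * b := by simp only [mul_assoc]
    _ = a * b := by rw [hab, mul_one]

namespace IsIrreducibleRep

section CommRing

variable {k G V : Type*} [CommRing k] [Monoid G] [AddCommGroup V] [Module k V]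
  {ρ : Representation k G V}

theorem eq_smul_one_of_commute (hρ : IsIrreducibleRep ρ) {f : End k V}
    (hf : ∀ g, Commute f (ρ g)) {a : k} {v : V} (hv : v ≠ 0) (hfv : f v = a • v) :
    f = a • 1 := by
  have hker : LinearMap.ker (f - a • 1) = ⊥ ∨ LinearMap.ker (f - a • 1) = ⊤ := by
    refine hρ.2 _ fun g w hw ↦ ?_
    have hcomm : Commute (f - a • 1) (ρ g) :=
      (hf g).sub_left ((Commute.one_left (ρ g)).smul_left a)
    rw [LinearMap.mem_ker] at hw ⊢
    rw [← End.mul_apply, hcomm.eq, End.mul_apply, hw, map_zero]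
  rcases hker with hbot | htop
  · have hmem : v ∈ LinearMap.ker (f - a • 1) := by simp [hfv]
    exact absurd ((Submodule.mem_bot k).1 (hbot ▸ hmem)) hv
  · exact sub_eq_zero.1 (LinearMap.ker_eq_top.1 htop)

theorem eq_one_or_eq_neg_one_of_commute (hρ : IsIrreducibleRep ρ) {f : End k V}
    (hf : ∀ g, Commute f (ρ g)) (hsq : f * f = 1) : f = 1 ∨ f = -1 := by
  refine or_iff_not_imp_left.2 fun hne ↦ ?_
  obtain ⟨v, hv⟩ : ∃ v, f v ≠ v := by
    contrapose! hne
    exact LinearMap.ext hne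
  have hanti : f (f v - v) = (-1 : k) • (f v - v) := by
    rw [map_sub, ← End.mul_apply, hsq, End.one_apply, neg_one_smul, neg_sub]
  simpa using hρ.eq_smul_one_of_commute hf (sub_ne_zero.2 hv) hanti

end CommRing

theorem finrank_eq_one_of_forall_mul_self {k G V : Type*} [Field k] [Monoid G] [AddCommGroup V]
    [Module k V] {ρ : Representation k G V} (hρ : IsIrreducibleRep ρ)
    (hsq : ∀ g, ρ g * ρ g = 1) : finrank k V = 1 := by
  have hcomm (g h : G) : Commute (ρ g) (ρ h) :=
    commute_of_mul_self_eq_one (hsq g) (hsq h) (by rw [← map_mul, hsq])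
  obtain ⟨v, hv⟩ := hρ.1
  have hstable (g : G) (w : V) (hw : w ∈ k ∙ v) : ρ g w ∈ k ∙ v := by
    rcases hρ.eq_one_or_eq_neg_one_of_commute (hcomm g) (hsq g) with h | h <;> simpa [h] using hw
  have htop : k ∙ v = ⊤ := (hρ.2 _ hstable).resolve_left (by simpa using hv)
  rw [← finrank_top, ← htop, finrank_span_singleton hv]

theorem map_r_two_eq_neg_one {k V : Type*} [Field k] [AddCommGroup V] [Module k V]
    {ρ : Representation k (DihedralGroup 4) V} (hρ : IsIrreducibleRep ρ)
    (hdim : finrank k V ≠ 1) : ρ (r 2) = -1 := by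
  have hcentral (g : DihedralGroup 4) : Commute (r 2) g := by
    revert g; unfold Commute SemiconjBy; decide
  have hsq : ρ (r 2) * ρ (r 2) = 1 := by
    rw [← map_mul, r_mul_r, show (2 + 2 : ZMod 4) = 0 from rfl, r_zero, map_one]
  refine (hρ.eq_one_or_eq_neg_one_of_commute (fun g ↦ (hcentral g).map ρ) hsq).resolve_left ?_
  intro hone
  have hsquare (g : DihedralGroup 4) : g * g = 1 ∨ g * g = r 2 := by
    revert g; decide
  refine hdim (hρ.finrank_eq_one_of_forall_mul_self fun g ↦ ?_)
  rcases hsquare g with h | h <;> simp [← map_mul, h, hone]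

end IsIrreducibleRep

section Dihedral

theorem closure_r_one_sr_zero (n : ℕ) [NeZero n] :
    Submonoid.closure {(r 1 : DihedralGroup n), sr 0} = ⊤ := by
  have hr (i : ZMod n) : r i ∈ Submonoid.closure {(r 1 : DihedralGroup n), sr 0} := by
    rw [← ZMod.natCast_zmod_val i, ← r_one_pow]
    exact pow_mem (Submonoid.subset_closure (by simp)) _
  refine top_unique fun g _ ↦ ?_
  rcases g with i | i
  · exact hr i
  · rw [← zero_add i, ← sr_mul_r]
    exact mul_mem (Submonoid.subset_closure (by simp)) (hr i)

theorem dihedralGroup_map_mul_self {n : ℕ} {M : Type*} [CommMonoid M] (ψ : DihedralGroup n →* M)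
    (g : DihedralGroup n) : ψ g * ψ g = 1 := by
  rcases g with i | i
  · calc ψ (r i) * ψ (r i) = ψ (r i) * ψ (r i) * ψ (sr 0 * sr 0) := by simp
      _ = ψ (r i * sr 0 * (r i * sr 0)) := by simp only [map_mul]; ac_rfl
      _ = 1 := by rw [r_mul_sr, sr_mul_self, map_one]
  · rw [← map_mul, sr_mul_self, map_one]

theorem exists_twist_of_map_r_two_eq_neg_one {k A : Type*} [CommRing k] [NoZeroDivisors k] [Ring A]
    [Algebra k A] (ρ : DihedralGroup 4 →* A) (hρ : ρ (r 2) = -1) (ψ : DihedralGroup 4 →* k) :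
    ∃ g, ∀ h, ρ h * ρ g = ψ h • (ρ g * ρ h) := by
  have hcomm {g h : DihedralGroup 4} {ε : k} (hε : ε = 1) (hgh : h * g = g * h) :
      ρ h * ρ g = ε • (ρ g * ρ h) := by
    rw [← map_mul, hgh, map_mul, hε, one_smul]
  have hanti {g h : DihedralGroup 4} {ε : k} (hε : ε = -1) (hgh : h * g = r 2 * (g * h)) :
      ρ h * ρ g = ε • (ρ g * ρ h) := by
    rw [← map_mul, hgh, map_mul, map_mul, hρ, hε, neg_one_mul, neg_one_smul]
  obtain ⟨g, hr, hs⟩ : ∃ g, ρ (r 1) * ρ g = ψ (r 1) • (ρ g * ρ (r 1)) ∧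
      ρ (sr 0) * ρ g = ψ (sr 0) • (ρ g * ρ (sr 0)) := by
    rcases mul_self_eq_one_iff.1 (dihedralGroup_map_mul_self ψ (r 1)) with hψr | hψr <;>
      rcases mul_self_eq_one_iff.1 (dihedralGroup_map_mul_self ψ (sr 0)) with hψs | hψs
    · exact ⟨1, hcomm hψr (by decide), hcomm hψs (by decide)⟩
    · exact ⟨r 1, hcomm hψr (by decide), hanti hψs (by decide)⟩
    · exact ⟨sr 0, hanti hψr (by decide), hcomm hψs (by decide)⟩
    · exact ⟨sr 1, hanti hψr (by decide), hanti hψs (by decide)⟩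
  refine ⟨g, fun h ↦ ?_⟩
  induction closure_r_one_sr_zero 4 ▸ Submonoid.mem_top h using Submonoid.closure_induction with
  | mem h hmem => rcases hmem with rfl | rfl <;> assumption
  | one => simp
  | mul h₁ h₂ _ _ ih₁ ih₂ =>
    calc ρ (h₁ * h₂) * ρ g = ρ h₁ * (ρ h₂ * ρ g) := by rw [map_mul, mul_assoc]
      _ = ψ h₂ • (ρ h₁ * ρ g * ρ h₂) := by rw [ih₂, mul_smul_comm, mul_assoc]
      _ = ψ (h₁ * h₂) • (ρ g * ρ (h₁ * h₂)) := by
        rw [ih₁, smul_mul_assoc, smul_smul, mul_comm, map_mul, map_mul, mul_assoc]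

end Dihedral

theorem stmt2_general {k V : Type*} [Field k] [AddCommGroup V] [Module k V]
    (ρ : Representation k (DihedralGroup 4) V)
    (hirr : IsIrreducibleRep ρ) (hdim : finrank k V = 2) (χ : DihedralGroup 4 →* kˣ) :
    ∃ Λ : V →ₗ[k] V →ₗ[k] k →ₗ[k] k, Λ ≠ 0 ∧
      ∀ (g : DihedralGroup 4) (v₁ v₂ : V) (z : k),
        Λ (ρ g v₁) (ρ g v₂) ((χ g : k) * z) = Λ v₁ v₂ z := by
  have : Module.Finite k V := Module.finite_of_finrank_eq_succ hdim
  have : Nontrivial V := Module.nontrivial_of_finrank_eq_succ hdim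
  have hcenter : ρ (r 2) = -1 := hirr.map_r_two_eq_neg_one (by omega)
  obtain ⟨g, htwist⟩ := exists_twist_of_map_r_two_eq_neg_one ρ hcenter
    ((Units.coeHom k).comp χ * LinearMap.det.comp ρ)
  have hg : ρ g ≠ 0 := ((Group.isUnit g).map ρ).ne_zero
  exact exists_invariant_trilinear_of_twist (finBasisOfFinrankEq k V hdim) ρ
    ((Units.coeHom k).comp χ) hg htwist

/-- Let `G` be the dihedral group of order `8` (`DihedralGroup 4`),
`W` an irreducible `2`-dimensional complex representation of `G`, and
`χ : G → ℂˣ` any homomorphism.  Then there is a nonzero `G`-invariant trilinear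
form on `W × W × χ`. -/
theorem stmt2 {V : Type*} [AddCommGroup V] [Module ℂ V]
    (ρ : Representation ℂ (DihedralGroup 4) V)
    (hirr : IsIrreducibleRep ρ) (hdim : Module.finrank ℂ V = 2)
    (χ : DihedralGroup 4 →* ℂˣ) :
    ∃ Λ : V →ₗ[ℂ] V →ₗ[ℂ] ℂ →ₗ[ℂ] ℂ, Λ ≠ 0 ∧
      ∀ (g : DihedralGroup 4) (v₁ v₂ : V) (z : ℂ),
        Λ (ρ g v₁) (ρ g v₂) ((χ g : ℂ) * z) = Λ v₁ v₂ z :=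
  stmt2_general ρ hirr hdim χ
end

section
/- Let F be a totally real number field whose ideal class group is trivial, with ring of integers 𝒪. Let a ∈ F^× be totally positive (that is, φ(a) > 0 for every real embedding φ : F → ℝ) and suppose that a has even valuation at every finite place of F (equivalently, the principal fractional ideal generated by a is the square of a fractional ideal of 𝒪). Then there exist a totally positive unit u ∈ 𝒪^× and an element c ∈ F^× such that a = u·c². -/
open NumberField

/-!
If `I ^ n = (a)` with `a ≠ 0`, then `I` is invertible and its class is killed by `n`. When the
class group has no `n`-torsion, `I = (c)`, and comparing generators of `(c) ^ n = (a)` gives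
`a = u * c ^ n` with `u` a unit. For even `n`, every embedding into an ordered ring sends `c ^ n`
to a positive element, so `u` and `a` have the same sign there.
-/

section

open FractionalIdeal
open scoped nonZeroDivisors

theorem map_mul_pow_pos_iff {K L : Type*} [DivisionRing K] [Ring L] [LinearOrder L]
    [IsStrictOrderedRing L] (φ : K →+* L) (u : K) {c : K} (hc : c ≠ 0) {n : ℕ} (hn : Even n) :
    0 < φ (u * c ^ n) ↔ 0 < φ u := by
  rw [map_mul, map_pow]
  exact mul_pos_iff_of_pos_right (hn.pow_pos ((map_ne_zero φ).mpr hc))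

theorem spanSingleton_pow_eq_spanSingleton_iff {R P : Type*} [CommRing R] [IsDomain R] [CommRing P]
    [Algebra R P] [Module.IsTorsionFree R P] {S : Submonoid R} [IsLocalization S P] {a c : P}
    {n : ℕ} :
    spanSingleton S c ^ n = spanSingleton S a ↔ ∃ u : Rˣ, a = algebraMap R P u * c ^ n := by
  rw [spanSingleton_pow, spanSingleton_eq_spanSingleton]
  simp only [Units.smul_def, Algebra.smul_def, eq_comm (a := a)]

variable {R K : Type*} [CommRing R] [IsDomain R] [Field K] [Algebra R K] [IsFractionRing R K]
  {I : FractionalIdeal R⁰ K} {a : K} {n : ℕ}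

theorem isUnit_of_pow_eq_spanSingleton (hn : n ≠ 0) (ha : a ≠ 0)
    (hI : I ^ n = spanSingleton R⁰ a) : IsUnit I := by
  rw [← isUnit_pow_iff hn, hI]
  exact .of_mul_eq_one _ (spanSingleton_mul_inv K ha)

theorem isPrincipal_of_isPrincipal_pow_of_isUnit (hI : IsUnit I)
    (htors : ∀ C : ClassGroup R, C ^ n = 1 → C = 1)
    (hpow : ((I ^ n : FractionalIdeal R⁰ K) : Submodule R K).IsPrincipal) :
    (I : Submodule R K).IsPrincipal := by
  lift I to (FractionalIdeal R⁰ K)ˣ using hI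
  rw [← Units.val_pow_eq_pow_val, ← ClassGroup.mk_eq_one_iff, map_pow] at hpow
  exact ClassGroup.mk_eq_one_iff.mp (htors _ hpow)

theorem exists_eq_unit_mul_pow_of_pow_eq_spanSingleton (hn : n ≠ 0)
    (htors : ∀ C : ClassGroup R, C ^ n = 1 → C = 1) (ha : a ≠ 0)
    (hI : I ^ n = spanSingleton R⁰ a) :
    ∃ (u : Rˣ) (c : K), a = algebraMap R K u * c ^ n := by
  have hprincipal : (I : Submodule R K).IsPrincipal :=
    isPrincipal_of_isPrincipal_pow_of_isUnit (isUnit_of_pow_eq_spanSingleton hn ha hI) htors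
      ((isPrincipal_iff _).mpr ⟨a, hI⟩)
  obtain ⟨c, rfl⟩ := (isPrincipal_iff I).mp hprincipal
  obtain ⟨u, hac⟩ := spanSingleton_pow_eq_spanSingleton_iff.mp hI
  exact ⟨u, c, hac⟩

theorem stmt5_general {L : Type*} [Ring L] [LinearOrder L] [IsStrictOrderedRing L]
    (hn : n ≠ 0) (heven : Even n) (htors : ∀ C : ClassGroup R, C ^ n = 1 → C = 1) (ha : a ≠ 0)
    (hI : I ^ n = spanSingleton R⁰ a) :
    ∃ (u : Rˣ) (c : K), c ≠ 0 ∧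
      (∀ φ : K →+* L, 0 < φ (algebraMap R K u) ↔ 0 < φ a) ∧
      a = algebraMap R K u * c ^ n := by
  obtain ⟨u, c, rfl⟩ := exists_eq_unit_mul_pow_of_pow_eq_spanSingleton hn htors ha hI
  have hc : c ≠ 0 := ne_zero_pow hn (right_ne_zero_of_mul ha)
  exact ⟨u, c, hc, fun φ ↦ (map_mul_pow_pos_iff φ _ hc heven).symm, rfl⟩

end

/-- Let `F` be a totally real number field with trivial ideal class
group, and let `a ∈ F^×` be totally positive such that the principal fractional
ideal generated by `a` is the square of a fractional ideal (equivalently, `a` has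
even valuation at every finite place).  Then `a = u · c²` for some totally
positive unit `u` of the ring of integers and some `c ∈ F^×`. -/
theorem stmt5 (F : Type*) [Field F] [NumberField F]
    (htotreal : ∀ v : InfinitePlace F, v.IsReal)
    (hclass : Subsingleton (ClassGroup (𝓞 F)))
    (a : F) (ha : a ≠ 0)
    (hpos : ∀ φ : F →+* ℝ, 0 < φ a)
    (hsq : ∃ I : FractionalIdeal (nonZeroDivisors (𝓞 F)) F,
      I ^ 2 = FractionalIdeal.spanSingleton (nonZeroDivisors (𝓞 F)) a) :
    ∃ (u : (𝓞 F)ˣ) (c : F), c ≠ 0 ∧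
      (∀ φ : F →+* ℝ, 0 < φ ((u : 𝓞 F) : F)) ∧
      a = ((u : 𝓞 F) : F) * c ^ 2 := by
  obtain ⟨I, hI⟩ := hsq
  simpa only [hpos, iff_true] using
    stmt5_general (L := ℝ) two_ne_zero even_two (fun C _ ↦ Subsingleton.elim C 1) ha hI
end
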